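/- Let K > 0, let N be an odd positive integer, let 0 ≤ β < N/10, and let x ∈ X_β. Then for every n ∈ ℤ the tail series converges and |Σ_{k=(N-1)/2}^∞ (K/(2k+1)!)·(x^{*(2k+1)})_n| ≤ ( K·(10β)^{N-1} / ( N!·(1 - (10β/N)²) ) ) · β/(|n|+1)². -/

import Mathlib

open scoped Real
open Complex Filter

/-- Convolution of two two-sided sequences of complex numbers. -/
noncomputable def conv (x y : ℤ → ℂ) : ℤ → ℂ := fun n => ∑' k : ℤ, x k * y (n - k)

/-- `convPow x k` is the `k`-fold convolution power `x^{*k}`;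
`x^{*0}` is the unit (Kronecker delta at `0`). -/
noncomputable def convPow (x : ℤ → ℂ) : ℕ → ℤ → ℂ
  | 0 => fun n => if n = 0 then 1 else 0
  | k + 1 => conv (convPow x k) x

/-- Membership in `X_β`: decay `|x_n| ≤ β/(|n|+1)^2` and the symmetry `x_{-n} = conj x_n`. -/
def memX (β : ℝ) (x : ℤ → ℂ) : Prop :=
  (∀ n : ℤ, ‖x n‖ ≤ β / (|(n : ℝ)| + 1) ^ 2) ∧ (∀ n : ℤ, x (-n) = starRingEnd ℂ (x n))

/-!
Splitting `(|n| + 1)² ≤ 2 ((|k| + 1)² + (|n - k| + 1)²)` shows that the weight `1 / (|n| + 1)²`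
dominates its own convolution square up to the factor `4 ∑ 1 / (|k| + 1)² = 4 (π² / 3 - 1) < 10`.
Each further convolution by `x` therefore costs a factor `10 β`, so the series is dominated by
`∑ (10 β) ^ (m - 1) / m!`, and `N! N ^ i ≤ (N + i)!` compares its tail with a geometric series.
-/

/-- A weight `w` that dominates its own convolution square up to the factor `c`; the sequences
bounded by a multiple of `w` are then closed under convolution. -/
structure IsConvWeight (w : ℤ → ℝ) (c : ℝ) : Prop where
  nonneg_const : 0 ≤ c
  summable_mul (n : ℤ) : Summable fun k => w k * w (n - k)
  tsum_mul_le (n : ℤ) : ∑' k, w k * w (n - k) ≤ c * w n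

theorem convPow_one (x : ℤ → ℂ) : convPow x 1 = x := by
  funext n
  change ∑' k : ℤ, (if k = 0 then 1 else 0) * x (n - k) = x n
  rw [tsum_eq_single 0 fun k hk => by simp [hk]]
  simp

namespace IsConvWeight

variable {w : ℤ → ℝ} {c : ℝ} {x : ℤ → ℂ}

theorem norm_conv_le {y : ℤ → ℂ} {A B : ℝ} (hw : IsConvWeight w c) (hA : 0 ≤ A) (hB : 0 ≤ B)
    (hx : ∀ n, ‖x n‖ ≤ A * w n) (hy : ∀ n, ‖y n‖ ≤ B * w n) (n : ℤ) :
    ‖conv x y n‖ ≤ c * A * B * w n := by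
  have term_le (k : ℤ) : ‖x k * y (n - k)‖ ≤ A * B * (w k * w (n - k)) := by
    calc ‖x k * y (n - k)‖ = ‖x k‖ * ‖y (n - k)‖ := norm_mul _ _
      _ ≤ A * w k * (B * w (n - k)) :=
        mul_le_mul (hx k) (hy _) (norm_nonneg _) ((norm_nonneg _).trans (hx k))
      _ = A * B * (w k * w (n - k)) := by ring
  calc ‖conv x y n‖ ≤ A * B * ∑' k, w k * w (n - k) :=
        tsum_of_norm_bounded ((hw.summable_mul n).hasSum.mul_left (A * B)) term_le
    _ ≤ A * B * (c * w n) := by gcongr; exact hw.tsum_mul_le n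
    _ = c * A * B * w n := by ring

theorem norm_convPow_succ_le {β : ℝ} (hw : IsConvWeight w c) (hβ : 0 ≤ β)
    (hx : ∀ n, ‖x n‖ ≤ β * w n) (m : ℕ) (n : ℤ) :
    ‖convPow x (m + 1) n‖ ≤ (c * β) ^ m * (β * w n) := by
  induction m generalizing n with
  | zero => simpa [convPow_one] using hx n
  | succ m ih =>
    have hA : 0 ≤ (c * β) ^ m * β := mul_nonneg (pow_nonneg (mul_nonneg hw.nonneg_const hβ) m) hβ
    have ih' (k : ℤ) : ‖convPow x (m + 1) k‖ ≤ (c * β) ^ m * β * w k :=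
      (ih k).trans_eq (mul_assoc _ _ _).symm
    calc ‖convPow x (m + 2) n‖ ≤ c * ((c * β) ^ m * β) * β * w n :=
          hw.norm_conv_le hA hβ ih' hx n
      _ = (c * β) ^ (m + 1) * (β * w n) := by ring

end IsConvWeight

theorem pow_add_div_factorial_add_le {r : ℝ} (hr : 0 ≤ r) {N : ℕ} (hN : N ≠ 0) (p i : ℕ) :
    r ^ (p + i) / (N + i).factorial ≤ r ^ p / N.factorial * (r / N) ^ i := by
  have factorial_le : N.factorial * N ^ i ≤ (N + i).factorial := by
    simpa using Nat.factorial_mul_pow_sub_le_factorial (Nat.le_add_right N i)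
  calc r ^ (p + i) / (N + i).factorial ≤ r ^ (p + i) / (N.factorial * N ^ i) := by
        gcongr
        exact_mod_cast factorial_le
    _ = r ^ p / N.factorial * (r / N) ^ i := by rw [pow_add, div_pow, div_mul_div_comm]

section FactorialTail

variable {𝕜 : Type*} [RCLike 𝕜] {a : ℕ → 𝕜} {r C : ℝ} {N : ℕ}

theorem norm_div_factorial_mul_le (hr : 0 ≤ r) (hN : N ≠ 0) (ha : ∀ m, ‖a (m + 1)‖ ≤ r ^ m * C)
    (K : 𝕜) (i : ℕ) :
    ‖K / ((N + i).factorial : 𝕜) * a (N + i)‖ ≤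
      ‖K‖ * r ^ (N - 1) / N.factorial * C * (r / N) ^ i := by
  have hC : 0 ≤ C := (norm_nonneg _).trans (by simpa using ha 0)
  have ha' : ‖a (N + i)‖ ≤ r ^ (N - 1 + i) * C := by
    simpa only [show N - 1 + i + 1 = N + i by omega] using ha (N - 1 + i)
  calc ‖K / ((N + i).factorial : 𝕜) * a (N + i)‖
      = ‖K‖ / (N + i).factorial * ‖a (N + i)‖ := by
        rw [norm_mul, norm_div, RCLike.norm_natCast]
    _ ≤ ‖K‖ / (N + i).factorial * (r ^ (N - 1 + i) * C) := by gcongr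
    _ = ‖K‖ * C * (r ^ (N - 1 + i) / (N + i).factorial) := by ring
    _ ≤ ‖K‖ * C * (r ^ (N - 1) / N.factorial * (r / N) ^ i) := by
        gcongr
        exact pow_add_div_factorial_add_le hr hN _ _
    _ = ‖K‖ * r ^ (N - 1) / N.factorial * C * (r / N) ^ i := by ring

theorem summable_and_norm_tsum_div_factorial_mul_le (hr : 0 ≤ r) (hrN : r < N)
    (ha : ∀ m, ‖a (m + 1)‖ ≤ r ^ m * C) {d : ℕ} (hd : d ≠ 0) (K : 𝕜) :
    Summable (fun j : ℕ => K / ((N + d * j).factorial : 𝕜) * a (N + d * j)) ∧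
      ‖∑' j : ℕ, K / ((N + d * j).factorial : 𝕜) * a (N + d * j)‖ ≤
        ‖K‖ * r ^ (N - 1) / (N.factorial * (1 - (r / N) ^ d)) * C := by
  have hN : (0 : ℝ) < N := hr.trans_lt hrN
  have ratio_lt_one : (r / N) ^ d < 1 :=
    pow_lt_one₀ (div_nonneg hr hN.le) ((div_lt_one hN).2 hrN) hd
  have hgeom := (hasSum_geometric_of_lt_one (by positivity) ratio_lt_one).mul_left
    (‖K‖ * r ^ (N - 1) / N.factorial * C)
  have term_le (j : ℕ) : ‖K / ((N + d * j).factorial : 𝕜) * a (N + d * j)‖ ≤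
      ‖K‖ * r ^ (N - 1) / N.factorial * C * ((r / N) ^ d) ^ j := by
    rw [← pow_mul]
    exact norm_div_factorial_mul_le hr (Nat.cast_pos.1 hN).ne' ha K (d * j)
  refine ⟨.of_norm_bounded hgeom.summable term_le,
    (tsum_of_norm_bounded hgeom term_le).trans_eq ?_⟩
  rw [mul_right_comm, ← div_eq_mul_inv, div_div]

end FactorialTail

/-- The decay profile `1 / (|n| + 1)²` of `X_β`. -/
noncomputable def invSqWeight (n : ℤ) : ℝ := ((|(n : ℝ)| + 1) ^ 2)⁻¹

theorem hasSum_invSqWeight : HasSum invSqWeight (π ^ 2 / 3 - 1) := by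
  have hnat : HasSum (fun n : ℕ => invSqWeight n) (π ^ 2 / 6) := by
    simpa [invSqWeight] using (hasSum_nat_add_iff' 1).2 hasSum_zeta_two
  have hneg : HasSum (fun n : ℕ => invSqWeight (-n)) (π ^ 2 / 6) := by
    simpa [invSqWeight] using hnat
  have hzero : invSqWeight 0 = 1 := by simp [invSqWeight]
  have total : π ^ 2 / 6 + π ^ 2 / 6 - invSqWeight 0 = π ^ 2 / 3 - 1 := by rw [hzero]; ring
  exact total ▸ hnat.of_nat_of_neg hneg

theorem inv_sq_mul_inv_sq_le {a b s : ℝ} (ha : 0 < a) (hb : 0 < b) (hs : 0 < s) (h : s ≤ a + b) :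
    (a ^ 2)⁻¹ * (b ^ 2)⁻¹ ≤ 2 * (s ^ 2)⁻¹ * ((a ^ 2)⁻¹ + (b ^ 2)⁻¹) := by
  have hsq : s ^ 2 ≤ 2 * (a ^ 2 + b ^ 2) := (pow_le_pow_left₀ hs.le h 2).trans add_sq_le
  calc (a ^ 2)⁻¹ * (b ^ 2)⁻¹ = s ^ 2 * ((s ^ 2)⁻¹ * (a ^ 2)⁻¹ * (b ^ 2)⁻¹) := by field_simp
    _ ≤ 2 * (a ^ 2 + b ^ 2) * ((s ^ 2)⁻¹ * (a ^ 2)⁻¹ * (b ^ 2)⁻¹) := by gcongr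
    _ = 2 * (s ^ 2)⁻¹ * ((a ^ 2)⁻¹ + (b ^ 2)⁻¹) := by field_simp; ring

theorem invSqWeight_mul_le (n k : ℤ) :
    invSqWeight k * invSqWeight (n - k) ≤
      2 * invSqWeight n * (invSqWeight k + invSqWeight (n - k)) := by
  refine inv_sq_mul_inv_sq_le (by positivity) (by positivity) (by positivity) ?_
  have triangle : |(n : ℝ)| ≤ |(k : ℝ)| + |((n - k : ℤ) : ℝ)| := by
    simpa using abs_add_le (k : ℝ) ((n - k : ℤ) : ℝ)
  linarith

theorem isConvWeight_invSqWeight : IsConvWeight invSqWeight 10 := by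
  have nonneg (n : ℤ) : 0 ≤ invSqWeight n := by unfold invSqWeight; positivity
  have hbound (n : ℤ) : HasSum (fun k => 2 * invSqWeight n * (invSqWeight k + invSqWeight (n - k)))
      (2 * invSqWeight n * ((π ^ 2 / 3 - 1) + (π ^ 2 / 3 - 1))) :=
    (hasSum_invSqWeight.add ((Equiv.subLeft n).hasSum_iff.2 hasSum_invSqWeight)).mul_left _
  have summable_mul (n : ℤ) : Summable fun k => invSqWeight k * invSqWeight (n - k) :=
    .of_nonneg_of_le (fun k => mul_nonneg (nonneg k) (nonneg _)) (invSqWeight_mul_le n)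
      (hbound n).summable
  refine ⟨by norm_num, summable_mul, fun n => ?_⟩
  have total_le : (π ^ 2 / 3 - 1) + (π ^ 2 / 3 - 1) ≤ 5 := by
    nlinarith [Real.pi_lt_d2, Real.pi_pos]
  calc ∑' k, invSqWeight k * invSqWeight (n - k)
      ≤ 2 * invSqWeight n * ((π ^ 2 / 3 - 1) + (π ^ 2 / 3 - 1)) :=
        hasSum_le (invSqWeight_mul_le n) (summable_mul n).hasSum (hbound n)
    _ ≤ 2 * invSqWeight n * 5 := by have := nonneg n; gcongr
    _ = 10 * invSqWeight n := by ring

theorem tail_estimate_general {w : ℤ → ℝ} {c β : ℝ} (hw : IsConvWeight w c) (hβ : 0 ≤ β)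
    {x : ℤ → ℂ} (hx : ∀ n, ‖x n‖ ≤ β * w n) {N : ℕ} (hN : c * β < N) {d : ℕ} (hd : d ≠ 0)
    (K : ℂ) (n : ℤ) :
    Summable (fun j : ℕ => K / ((N + d * j).factorial : ℂ) * convPow x (N + d * j) n) ∧
      ‖∑' j : ℕ, K / ((N + d * j).factorial : ℂ) * convPow x (N + d * j) n‖ ≤
        ‖K‖ * (c * β) ^ (N - 1) / (N.factorial * (1 - (c * β / N) ^ d)) * (β * w n) :=
  summable_and_norm_tsum_div_factorial_mul_le (a := fun m => convPow x m n)
    (mul_nonneg hw.nonneg_const hβ) hN (fun m => hw.norm_convPow_succ_le hβ hx m n) hd K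

/-- Lemma `lem:ogon`: tail estimate. For odd `N`, `0 ≤ β < N/10` and
`x ∈ X_β`, the tail `Σ_{k ≥ (N-1)/2} (K/(2k+1)!) (x^{*(2k+1)})_n` converges and is bounded by
`(K (10β)^{N-1} / (N! (1 - (10β/N)²))) · β/(|n|+1)²`. -/
theorem tail_estimate (K β : ℝ) (hK : 0 < K) (N : ℕ) (hN : Odd N) (hNpos : 0 < N)
    (hβ0 : 0 ≤ β) (hβN : β < N / 10) (x : ℤ → ℂ) (hx : memX β x) :
    ∀ n : ℤ,
      Summable (fun j : ℕ =>
        (K / (Nat.factorial (2 * ((N - 1) / 2 + j) + 1) : ℂ)) *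
          convPow x (2 * ((N - 1) / 2 + j) + 1) n) ∧
      ‖∑' j : ℕ, (K / (Nat.factorial (2 * ((N - 1) / 2 + j) + 1) : ℂ)) *
          convPow x (2 * ((N - 1) / 2 + j) + 1) n‖ ≤
        K * (10 * β) ^ (N - 1) / ((Nat.factorial N : ℝ) * (1 - (10 * β / N) ^ 2)) *
          (β / (|(n : ℝ)| + 1) ^ 2) := by
  intro n
  have index_eq (j : ℕ) : 2 * ((N - 1) / 2 + j) + 1 = N + 2 * j := by
    obtain ⟨M, rfl⟩ := hN
    omega
  have hdecay (k : ℤ) : ‖x k‖ ≤ β * invSqWeight k := by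
    simpa only [invSqWeight, ← div_eq_mul_inv] using hx.1 k
  simpa only [index_eq, Complex.norm_of_nonneg hK.le, invSqWeight, ← div_eq_mul_inv] using
    tail_estimate_general isConvWeight_invSqWeight hβ0 hdecay (by linarith) two_ne_zero K n
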